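/- arXiv:2003.02521 — 3 statements merged into one kernel-verified Lean document; each statement's English description precedes it below -/
import Mathlib

section
/- (Realizations Lemma) Assume Σ_UID^rev and Σ_UFD are reversible. For any balanced pssinstance P of a finite instance I that satisfies Σ_UFD, there exists a piecewise realization of P that is both Σ_UFD-compliant and Σ_UID^rev-compliant. -/
namespace FQA

/-- A relational signature: a finite set of relation names, each with an arity `≥ 1`. -/
structure Sig where
  Rel : Type
  rel_fin : Finite Rel
  ar : Rel → ℕ
  ar_pos : ∀ R, 1 ≤ ar R

/-- The positions of a signature: pairs of a relation and an index into its arity. -/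
abbrev Sig.Pos (σ : Sig) : Type := Σ R : σ.Rel, Fin (σ.ar R)

/-- A fact `R(a₁, …, a_{ar R})` with elements from `α`. -/
abbrev Fact (σ : Sig) (α : Type) : Type := Σ R : σ.Rel, Fin (σ.ar R) → α

/-- An instance is a set of facts. -/
abbrev Inst (σ : Sig) (α : Type) : Type := Set (Fact σ α)

variable {σ : Sig} {α β : Type}

/-- Element `a` occurs at position `p` in some fact of the instance `I`. -/
def occursAt (I : Inst σ α) (p : σ.Pos) (a : α) : Prop :=
  ∃ t : Fin (σ.ar p.1) → α, (⟨p.1, t⟩ : Fact σ α) ∈ I ∧ t p.2 = a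

/-- The active domain of an instance: the elements occurring in some fact. -/
def activeDom (I : Inst σ α) : Set α :=
  {a | ∃ F : Fact σ α, F ∈ I ∧ ∃ i, F.2 i = a}

/-- A unary inclusion dependency `src ⊆ dst` (nontrivial: `src ≠ dst`). -/
structure UID (σ : Sig) where
  src : σ.Pos
  dst : σ.Pos
  ne : src ≠ dst

/-- The reverse of a UID. -/
def UID.rev (τ : UID σ) : UID σ := ⟨τ.dst, τ.src, τ.ne.symm⟩

/-- An instance satisfies a UID if every element occurring at `src` also occurs at `dst`. -/
def satUID (I : Inst σ α) (τ : UID σ) : Prop :=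
  ∀ a, occursAt I τ.src a → occursAt I τ.dst a

/-- A unary functional dependency `R^src → R^dst` (nontrivial: `src ≠ dst`). -/
structure UFD (σ : Sig) where
  rel : σ.Rel
  src : Fin (σ.ar rel)
  dst : Fin (σ.ar rel)
  ne : src ≠ dst

/-- The reverse of a UFD. -/
def UFD.rev (φ : UFD σ) : UFD σ := ⟨φ.rel, φ.dst, φ.src, φ.ne.symm⟩

/-- The source position of a UFD, as a position of the signature. -/
def UFD.posSrc (φ : UFD σ) : σ.Pos := ⟨φ.rel, φ.src⟩

/-- The target position of a UFD, as a position of the signature. -/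
def UFD.posDst (φ : UFD σ) : σ.Pos := ⟨φ.rel, φ.dst⟩

/-- An instance satisfies a UFD if any two facts of `rel` agreeing at `src` agree at `dst`. -/
def satUFD (I : Inst σ α) (φ : UFD σ) : Prop :=
  ∀ t u : Fin (σ.ar φ.rel) → α,
    (⟨φ.rel, t⟩ : Fact σ α) ∈ I → (⟨φ.rel, u⟩ : Fact σ α) ∈ I →
    t φ.src = u φ.src → t φ.dst = u φ.dst

/-- `a` wants to appear at position `p` in `I` (with respect to the UIDs `Su`): some
UID of `Su` with target `p` applies to `a`, and `a` does not yet occur at `p`. -/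
def wants (Su : Set (UID σ)) (I : Inst σ α) (p : σ.Pos) (a : α) : Prop :=
  (∃ τ ∈ Su, τ.dst = p ∧ occursAt I τ.src a) ∧ ¬ occursAt I p a

/-- `I` is a weakly-sound superinstance of `I₀` for the UIDs `Su`: elements of `I₀`
only appear at positions where they already appeared or wanted to appear, and new
elements only appear at positions related by UIDs of `Su` in both directions. -/
def WeaklySound (Su : Set (UID σ)) (I₀ I : Inst σ ℕ) : Prop :=
  (∀ a ∈ activeDom I₀, ∀ p : σ.Pos, occursAt I p a →
      occursAt I₀ p a ∨ wants Su I₀ p a) ∧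
  (∀ a ∈ activeDom I, a ∉ activeDom I₀ → ∀ p q : σ.Pos,
      occursAt I p a → occursAt I q a →
      p = q ∨ ∃ h : p ≠ q, (⟨p, q, h⟩ : UID σ) ∈ Su ∧ (⟨q, p, h.symm⟩ : UID σ) ∈ Su)

/-- A set of UIDs is transitively closed. -/
def TransClosedUID (Su : Set (UID σ)) : Prop :=
  ∀ τ ∈ Su, ∀ τ' ∈ Su, τ.dst = τ'.src →
    ∀ h : τ.src ≠ τ'.dst, (⟨τ.src, τ'.dst, h⟩ : UID σ) ∈ Su

/-- A set of UFDs is closed under UFD transitivity. -/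
def TransClosedUFD (Sf : Set (UFD σ)) : Prop :=
  ∀ (R : σ.Rel) (i j k : Fin (σ.ar R)) (h1 : i ≠ j) (h2 : j ≠ k) (h3 : i ≠ k),
    (⟨R, i, j, h1⟩ : UFD σ) ∈ Sf → (⟨R, j, k, h2⟩ : UFD σ) ∈ Sf →
    (⟨R, i, k, h3⟩ : UFD σ) ∈ Sf

/-- A position occurs in some UID of `Su`. -/
def occursInUIDs (Su : Set (UID σ)) (p : σ.Pos) : Prop :=
  ∃ τ ∈ Su, τ.src = p ∨ τ.dst = p

/-- The UIDs `Su` and UFDs `Sf` are reversible: both are closed under implication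
(transitivity), every UID of `Su` has its reverse in `Su`, and every UFD of `Sf`
whose two positions occur in UIDs of `Su` has its reverse in `Sf`. -/
def Reversible (Su : Set (UID σ)) (Sf : Set (UFD σ)) : Prop :=
  TransClosedUID Su ∧ TransClosedUFD Sf ∧
  (∀ τ ∈ Su, τ.rev ∈ Su) ∧
  (∀ φ ∈ Sf, occursInUIDs Su φ.posSrc → occursInUIDs Su φ.posDst → φ.rev ∈ Sf)

/-- Positions `p` and `q` are `∼_ID`-related: equal, or the UID `p ⊆ q` is in `Su`
(under the reversibility assumption this is an equivalence relation). -/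
def eqID (Su : Set (UID σ)) (p q : σ.Pos) : Prop :=
  p = q ∨ ∃ h : p ≠ q, (⟨p, q, h⟩ : UID σ) ∈ Su

/-- Wanting for a pssinstance `(I, H, lam)`: elements of `I` want to appear where
they wanted to appear in `I`, and helpers want to appear at the positions of their
assigned `∼_ID`-class. -/
def wantsP (Su : Set (UID σ)) (I : Inst σ ℕ) (H : Set ℕ) (lam : ℕ → Set σ.Pos)
    (p : σ.Pos) (a : ℕ) : Prop :=
  wants Su I p a ∨ (a ∈ H ∧ p ∈ lam a)

/-- `(I, H, lam)` is a pssinstance of `I`: `H` is a finite set of fresh helper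
elements, and `lam` maps each helper to a `∼_ID`-class of positions. -/
def IsPSS (Su : Set (UID σ)) (I : Inst σ ℕ) (H : Set ℕ) (lam : ℕ → Set σ.Pos) : Prop :=
  H.Finite ∧ Disjoint H (activeDom I) ∧
  ∀ h ∈ H, ∃ p : σ.Pos, lam h = {q | eqID Su p q}

/-- The pssinstance `(I, H, lam)` is balanced: for every two positions of a relation
related by a pair of inverse UFDs of `Sf`, equally many elements want to appear there. -/
def BalancedPSS (Su : Set (UID σ)) (Sf : Set (UFD σ)) (I : Inst σ ℕ)
    (H : Set ℕ) (lam : ℕ → Set σ.Pos) : Prop :=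
  ∀ (R : σ.Rel) (i j : Fin (σ.ar R)) (hij : i ≠ j),
    (⟨R, i, j, hij⟩ : UFD σ) ∈ Sf → (⟨R, j, i, hij.symm⟩ : UFD σ) ∈ Sf →
    {a : ℕ | wantsP Su I H lam ⟨R, i⟩ a}.ncard =
      {a : ℕ | wantsP Su I H lam ⟨R, j⟩ a}.ncard

/-- Positions `i` and `j` of relation `R` are `↔_FUN`-related: equal, or both UFDs
`R^i → R^j` and `R^j → R^i` are in `Sf`. -/
def funEq (Sf : Set (UFD σ)) (R : σ.Rel) (i j : Fin (σ.ar R)) : Prop :=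
  i = j ∨ ∃ h : i ≠ j, (⟨R, i, j, h⟩ : UFD σ) ∈ Sf ∧ (⟨R, j, i, h.symm⟩ : UFD σ) ∈ Sf

/-- The `↔_FUN`-class of position `i` of relation `R`. -/
def fclass (Sf : Set (UFD σ)) (R : σ.Rel) (i : Fin (σ.ar R)) : Set (Fin (σ.ar R)) :=
  {j | funEq Sf R i j}

/-- Projection of a piecewise instance to a position: the elements appearing at that
position in some tuple of the corresponding `↔_FUN`-class. -/
def projPI (Sf : Set (UFD σ))
    (PI : (R : σ.Rel) → Set (Fin (σ.ar R)) → Set (Fin (σ.ar R) → ℕ))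
    (p : σ.Pos) : Set ℕ :=
  {a | ∃ t ∈ PI p.1 (fclass Sf p.1 p.2), t p.2 = a}

/-!
At every position, rank the elements that want to appear there in increasing order. The new tuples
over a `↔_FUN`-class are those all of whose entries want their position and have the same rank.
Since the position and the rank determine the element, two new tuples that agree at one position of
the class agree on the whole class. Balance makes all positions of a class have equally many ranks,
so every element that wants a position is placed there by some new tuple. Consequently the elements
placed at a position are exactly those that occur or want to occur there, and this set only grows
along a UID because `∼_ID` is transitive.
-/

section Keyed

variable {ι γ : Type*} {C : Set ι}

/-- Every position of `C` is a key of the set `K` of tuples: tuples of `K` that agree at one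
position of `C` agree on all of `C`. Tuples are total functions, but only their entries in `C`
matter. -/
def Keyed (C : Set ι) (K : Set (ι → γ)) : Prop :=
  ∀ t ∈ K, ∀ t' ∈ K, (∃ j ∈ C, t j = t' j) → ∀ j ∈ C, t j = t' j

lemma Keyed.union {K L : Set (ι → γ)} (hK : Keyed C K) (hL : Keyed C L)
    (hne : ∀ t ∈ K, ∀ t' ∈ L, ∀ j ∈ C, t j ≠ t' j) : Keyed C (K ∪ L) := by
  rintro t (ht | ht) t' (ht' | ht') ⟨j, hj, hagree⟩
  · exact hK t ht t' ht' ⟨j, hj, hagree⟩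
  · exact absurd hagree (hne t ht t' ht' j hj)
  · exact absurd hagree.symm (hne t' ht' t ht j hj)
  · exact hL t ht t' ht' ⟨j, hj, hagree⟩

open Classical in
/-- The tuples whose entries in `C` satisfy the respective predicates `W j` and all have the same
rank, the rank of `a` at `j` being the number of `b < a` with `W j b`. -/
def equirankTuples (C : Set ι) (W : ι → ℕ → Prop) : Set (ι → ℕ) :=
  {t | ∃ k, ∀ j ∈ C, W j (t j) ∧ Nat.count (W j) (t j) = k}

variable {W : ι → ℕ → Prop}

lemma keyed_equirankTuples : Keyed C (equirankTuples C W) := by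
  classical
  rintro t ⟨k, ht⟩ t' ⟨k', ht'⟩ ⟨j, hj, hagree⟩ l hl
  have hrank : k = k' := by rw [← (ht j hj).2, ← (ht' j hj).2, hagree]
  refine Nat.count_injective (ht l hl).1 (ht' l hl).1 ?_
  rw [(ht l hl).2, (ht' l hl).2, hrank]

lemma exists_mem_equirankTuples {i : ι} {a : ℕ} (hfin : {b | W i b}.Finite)
    (hcard : ∀ j ∈ C, {b | W i b}.ncard = {b | W j b}.ncard) (ha : W i a) :
    ∃ t ∈ equirankTuples C W, t i = a := by
  classical
  set k := Nat.count (W i) a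
  have hk : k < {b | W i b}.ncard := by
    rw [Set.ncard_eq_toFinset_card _ hfin]
    exact Nat.count_lt_card hfin ha
  refine ⟨fun j => Nat.nth (W j) k, ⟨k, fun j hj => ?_⟩, Nat.nth_count ha⟩
  rw [hcard j hj] at hk
  have hfin_j : {b | W j b}.Finite := Set.finite_of_ncard_pos (Nat.zero_lt_of_lt hk)
  rw [Set.ncard_eq_toFinset_card _ hfin_j] at hk
  exact ⟨Nat.nth_mem_of_lt_card hfin_j hk, Nat.count_nth_of_lt_card_finite hfin_j hk⟩

end Keyed

section Dependencies

variable {Su : Set (UID σ)} {Sf : Set (UFD σ)} {I : Inst σ α} {p q r : σ.Pos} {a : α}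

lemma occursAt.mem_activeDom (h : occursAt I p a) : a ∈ activeDom I := by
  obtain ⟨t, ht, rfl⟩ := h
  exact ⟨_, ht, _, rfl⟩

lemma finite_activeDom (hfin : I.Finite) : (activeDom I).Finite := by
  have hunion : activeDom I = ⋃ F ∈ I, Set.range F.2 := by
    ext a
    simp [activeDom]
  rw [hunion]
  exact hfin.biUnion fun F _ => Set.finite_range F.2

lemma eqID_of_mem {τ : UID σ} (hτ : τ ∈ Su) : eqID Su τ.src τ.dst :=
  Or.inr ⟨τ.ne, hτ⟩

lemma eqID.trans (htrans : TransClosedUID Su) (hpq : eqID Su p q) (hqr : eqID Su q r) :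
    eqID Su p r := by
  rcases hpq with rfl | ⟨hpq, hpq_mem⟩
  · exact hqr
  rcases hqr with rfl | ⟨hqr, hqr_mem⟩
  · exact Or.inr ⟨hpq, hpq_mem⟩
  exact or_iff_not_imp_left.mpr fun hpr => ⟨hpr, htrans _ hpq_mem _ hqr_mem rfl hpr⟩

lemma occursAt_or_wants_iff :
    occursAt I p a ∨ wants Su I p a ↔ ∃ q, eqID Su q p ∧ occursAt I q a := by
  constructor
  · rintro (h | ⟨⟨τ, hτ, rfl, h⟩, -⟩)
    · exact ⟨p, Or.inl rfl, h⟩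
    · exact ⟨τ.src, eqID_of_mem hτ, h⟩
  · rintro ⟨q, rfl | ⟨hqp, hmem⟩, h⟩
    · exact Or.inl h
    · exact or_iff_not_imp_left.mpr fun hp => ⟨⟨_, hmem, rfl, h⟩, hp⟩

lemma funEq.eq_iff_eq (hsat : ∀ φ ∈ Sf, satUFD I φ) {R : σ.Rel} {i j : Fin (σ.ar R)}
    (hij : funEq Sf R i j) {t u : Fin (σ.ar R) → α} (ht : (⟨R, t⟩ : Fact σ α) ∈ I)
    (hu : (⟨R, u⟩ : Fact σ α) ∈ I) : t i = u i ↔ t j = u j := by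
  rcases hij with rfl | ⟨_, hij_mem, hji_mem⟩
  · rfl
  · exact ⟨hsat _ hij_mem t u ht hu, hsat _ hji_mem t u ht hu⟩

lemma self_mem_fclass (R : σ.Rel) (i : Fin (σ.ar R)) : i ∈ fclass Sf R i :=
  Or.inl rfl

lemma keyed_fclass_facts (hsat : ∀ φ ∈ Sf, satUFD I φ) (R : σ.Rel) (i : Fin (σ.ar R)) :
    Keyed (fclass Sf R i) {t | (⟨R, t⟩ : Fact σ α) ∈ I} := by
  rintro t ht u hu ⟨j, hj, hagree⟩ l hl
  have hi : t i = u i := (funEq.eq_iff_eq hsat hj ht hu).mpr hagree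
  exact (funEq.eq_iff_eq hsat hl ht hu).mp hi

end Dependencies

/-- A family of sets of tuples, indexed by the sets of positions of each relation. Only the values
at `↔_FUN`-classes, and there only the entries of the tuples in the class, are meaningful. -/
abbrev PiecewiseInst (σ : Sig) : Type :=
  (R : σ.Rel) → Set (Fin (σ.ar R)) → Set (Fin (σ.ar R) → ℕ)

/-- `PI` is a piecewise realization of the pssinstance `(I, H, lam)`: it contains the projections
of `I`, its elements are `dom(I) ⊔ H`, and its tuples that are not projections of facts of `I`
respect the wants of the pssinstance. -/
structure IsPiecewiseRealization (Su : Set (UID σ)) (Sf : Set (UFD σ)) (I : Inst σ ℕ) (H : Set ℕ)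
    (lam : ℕ → Set σ.Pos) (PI : PiecewiseInst σ) : Prop where
  exists_extending : ∀ (R : σ.Rel) (u : Fin (σ.ar R) → ℕ), (⟨R, u⟩ : Fact σ ℕ) ∈ I →
    ∀ i : Fin (σ.ar R), ∃ t ∈ PI R (fclass Sf R i), ∀ j ∈ fclass Sf R i, t j = u j
  elements_eq : {a : ℕ | ∃ (R : σ.Rel) (i : Fin (σ.ar R)), ∃ t ∈ PI R (fclass Sf R i),
    ∃ j ∈ fclass Sf R i, t j = a} = activeDom I ∪ H
  wantsP_of_new : ∀ (R : σ.Rel) (i : Fin (σ.ar R)), ∀ t ∈ PI R (fclass Sf R i),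
    (¬ ∃ u : Fin (σ.ar R) → ℕ, (⟨R, u⟩ : Fact σ ℕ) ∈ I ∧ ∀ j ∈ fclass Sf R i, t j = u j) →
    ∀ j ∈ fclass Sf R i, wantsP Su I H lam ⟨R, j⟩ (t j)

/-- `Σ_UFD`-compliance of a piecewise instance: every position of a `↔_FUN`-class is a key. -/
def UFDCompliant (Sf : Set (UFD σ)) (PI : PiecewiseInst σ) : Prop :=
  ∀ (R : σ.Rel) (i : Fin (σ.ar R)), Keyed (fclass Sf R i) (PI R (fclass Sf R i))

/-- `Σ_UID`-compliance of a piecewise instance: its projections satisfy the UIDs of `Su`. The UFDs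
`Sf` enter only through the `↔_FUN`-classes used to project. -/
def UIDCompliant (Su : Set (UID σ)) (Sf : Set (UFD σ)) (PI : PiecewiseInst σ) : Prop :=
  ∀ τ ∈ Su, projPI Sf PI τ.src ⊆ projPI Sf PI τ.dst

section Realization

/-- In the pssinstance `(I, H, lam)`, the element `a` occurs at `p` or wants to occur there. -/
def occursOrWants (Su : Set (UID σ)) (I : Inst σ ℕ) (H : Set ℕ) (lam : ℕ → Set σ.Pos)
    (p : σ.Pos) (a : ℕ) : Prop :=
  occursAt I p a ∨ wantsP Su I H lam p a

/-- The piecewise realization constructed from `(I, H, lam)`: the facts of `I`, together with the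
tuples of wanting elements of equal rank. -/
def rankRealization (Su : Set (UID σ)) (I : Inst σ ℕ) (H : Set ℕ) (lam : ℕ → Set σ.Pos) :
    PiecewiseInst σ := fun R C =>
  {t | (⟨R, t⟩ : Fact σ ℕ) ∈ I} ∪ equirankTuples C fun j => wantsP Su I H lam ⟨R, j⟩

variable {Su : Set (UID σ)} {Sf : Set (UFD σ)} {I : Inst σ ℕ} {H : Set ℕ} {lam : ℕ → Set σ.Pos}
  {p : σ.Pos} {a : ℕ}

lemma occursOrWants_iff : occursOrWants Su I H lam p a ↔
    (∃ q, eqID Su q p ∧ occursAt I q a) ∨ (a ∈ H ∧ p ∈ lam a) := by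
  rw [← occursAt_or_wants_iff, or_assoc]
  rfl

lemma occursOrWants.mem_union (h : occursOrWants Su I H lam p a) : a ∈ activeDom I ∪ H := by
  rcases occursOrWants_iff.mp h with ⟨q, -, hocc⟩ | ⟨hH, -⟩
  · exact Or.inl hocc.mem_activeDom
  · exact Or.inr hH

lemma exists_occursOrWants (hpss : IsPSS Su I H lam) (ha : a ∈ activeDom I ∪ H) :
    ∃ p, occursOrWants Su I H lam p a := by
  rcases ha with ⟨⟨R, t⟩, ht, i, hi⟩ | hH
  · exact ⟨⟨R, i⟩, Or.inl ⟨t, ht, hi⟩⟩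
  · obtain ⟨p, hp⟩ := hpss.2.2 a hH
    have hmem : p ∈ lam a := hp ▸ Or.inl rfl
    exact ⟨p, Or.inr (Or.inr ⟨hH, hmem⟩)⟩

lemma occursOrWants.of_eqID (htrans : TransClosedUID Su) (hpss : IsPSS Su I H lam)
    {q : σ.Pos} (hpq : eqID Su p q) (h : occursOrWants Su I H lam p a) :
    occursOrWants Su I H lam q a := by
  rw [occursOrWants_iff] at h ⊢
  rcases h with ⟨s, hsp, hocc⟩ | ⟨hH, hp⟩
  · exact Or.inl ⟨s, hsp.trans htrans hpq, hocc⟩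
  · obtain ⟨s, hs⟩ := hpss.2.2 a hH
    rw [hs] at hp ⊢
    exact Or.inr ⟨hH, eqID.trans htrans hp hpq⟩

lemma wantsP.not_occursAt (hdisj : Disjoint H (activeDom I)) (h : wantsP Su I H lam p a) :
    ¬ occursAt I p a := by
  rcases h with ⟨-, hnot⟩ | ⟨hH, -⟩
  · exact hnot
  · exact fun hocc => Set.disjoint_left.mp hdisj hH hocc.mem_activeDom

lemma finite_setOf_wantsP (hfin : I.Finite) (hH : H.Finite) (p : σ.Pos) :
    {a | wantsP Su I H lam p a}.Finite :=
  ((finite_activeDom hfin).union hH).subset fun _ h => occursOrWants.mem_union (Or.inr h)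

lemma BalancedPSS.ncard_eq (hbal : BalancedPSS Su Sf I H lam) {R : σ.Rel} {i j : Fin (σ.ar R)}
    (hij : funEq Sf R i j) :
    {a | wantsP Su I H lam ⟨R, i⟩ a}.ncard = {a | wantsP Su I H lam ⟨R, j⟩ a}.ncard := by
  rcases hij with rfl | ⟨hij, hij_mem, hji_mem⟩
  · rfl
  · exact hbal R i j hij hij_mem hji_mem

lemma occursOrWants_of_mem_rankRealization {R : σ.Rel} {C : Set (Fin (σ.ar R))}
    {t : Fin (σ.ar R) → ℕ} (ht : t ∈ rankRealization Su I H lam R C)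
    {j : Fin (σ.ar R)} (hj : j ∈ C) : occursOrWants Su I H lam ⟨R, j⟩ (t j) := by
  rcases ht with hfact | ⟨k, hk⟩
  · exact Or.inl ⟨t, hfact, rfl⟩
  · exact Or.inr (hk j hj).1

lemma mem_projPI_rankRealization_iff (hfin : I.Finite) (hH : H.Finite)
    (hbal : BalancedPSS Su Sf I H lam) :
    a ∈ projPI Sf (rankRealization Su I H lam) p ↔ occursOrWants Su I H lam p a := by
  constructor
  · rintro ⟨t, ht, rfl⟩
    exact occursOrWants_of_mem_rankRealization ht (self_mem_fclass _ _)
  · rintro (⟨t, ht, hta⟩ | hwants)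
    · exact ⟨t, Or.inl ht, hta⟩
    · obtain ⟨t, ht, hta⟩ := exists_mem_equirankTuples
        (W := fun j => wantsP Su I H lam ⟨p.1, j⟩) (finite_setOf_wantsP hfin hH p)
        (fun _ hj => hbal.ncard_eq hj) hwants
      exact ⟨t, Or.inr ht, hta⟩

lemma elements_rankRealization (hfin : I.Finite) (hpss : IsPSS Su I H lam)
    (hbal : BalancedPSS Su Sf I H lam) :
    {a : ℕ | ∃ (R : σ.Rel) (i : Fin (σ.ar R)),
      ∃ t ∈ rankRealization Su I H lam R (fclass Sf R i), ∃ j ∈ fclass Sf R i, t j = a} =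
      activeDom I ∪ H := by
  ext a
  constructor
  · rintro ⟨R, i, t, ht, j, hj, rfl⟩
    exact (occursOrWants_of_mem_rankRealization ht hj).mem_union
  · intro ha
    obtain ⟨p, hp⟩ := exists_occursOrWants hpss ha
    obtain ⟨t, ht, hta⟩ := (mem_projPI_rankRealization_iff hfin hpss.1 hbal).mpr hp
    exact ⟨p.1, p.2, t, ht, p.2, self_mem_fclass _ _, hta⟩

lemma isPiecewiseRealization_rankRealization (hfin : I.Finite) (hpss : IsPSS Su I H lam)
    (hbal : BalancedPSS Su Sf I H lam) :
    IsPiecewiseRealization Su Sf I H lam (rankRealization Su I H lam) where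
  exists_extending _ u hu _ := ⟨u, Or.inl hu, fun _ _ => rfl⟩
  elements_eq := elements_rankRealization hfin hpss hbal
  wantsP_of_new := by
    rintro R i t (hfact | ⟨k, hk⟩) hnew j hj
    · exact absurd ⟨t, hfact, fun _ _ => rfl⟩ hnew
    · exact (hk j hj).1

lemma ufdCompliant_rankRealization (hsat : ∀ φ ∈ Sf, satUFD I φ)
    (hdisj : Disjoint H (activeDom I)) : UFDCompliant Sf (rankRealization Su I H lam) := by
  refine fun R i => (keyed_fclass_facts hsat R i).union keyed_equirankTuples ?_
  rintro t ht t' ⟨k, hk⟩ j hj hagree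
  exact (hk j hj).1.not_occursAt hdisj ⟨t, ht, hagree⟩

lemma uidCompliant_rankRealization (htrans : TransClosedUID Su) (hfin : I.Finite)
    (hpss : IsPSS Su I H lam) (hbal : BalancedPSS Su Sf I H lam) :
    UIDCompliant Su Sf (rankRealization Su I H lam) := by
  intro τ hτ a ha
  rw [mem_projPI_rankRealization_iff hfin hpss.1 hbal] at ha ⊢
  exact ha.of_eqID htrans hpss (eqID_of_mem hτ)

end Realization

theorem realizations_general (Su : Set (UID σ)) (Sf : Set (UFD σ)) (htrans : TransClosedUID Su)
    (I : Inst σ ℕ) (hfin : I.Finite) (hsat : ∀ φ ∈ Sf, satUFD I φ)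
    (H : Set ℕ) (lam : ℕ → Set σ.Pos) (hpss : IsPSS Su I H lam)
    (hbal : BalancedPSS Su Sf I H lam) :
    ∃ PI : PiecewiseInst σ, IsPiecewiseRealization Su Sf I H lam PI ∧
      UFDCompliant Sf PI ∧ UIDCompliant Su Sf PI :=
  ⟨rankRealization Su I H lam, isPiecewiseRealization_rankRealization hfin hpss hbal,
    ufdCompliant_rankRealization hsat hpss.2.1,
    uidCompliant_rankRealization htrans hfin hpss hbal⟩

/-- **Realizations Lemma.** For reversible UIDs `Su` and UFDs `Sf`, any balanced
pssinstance `(I, H, lam)` of a finite instance `I` satisfying `Sf` has a piecewise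
realization (a family of tuple sets over the `↔_FUN`-classes) that is both
`Sf`-compliant and `Su`-compliant. -/
theorem realizations
    {σ : Sig} (Su : Set (UID σ)) (Sf : Set (UFD σ))
    (hrev : Reversible Su Sf)
    (I : Inst σ ℕ) (hfin : I.Finite)
    (hsat : ∀ φ ∈ Sf, satUFD I φ)
    (H : Set ℕ) (lam : ℕ → Set σ.Pos)
    (hpss : IsPSS Su I H lam)
    (hbal : BalancedPSS Su Sf I H lam) :
    ∃ PI : (R : σ.Rel) → Set (Fin (σ.ar R)) → Set (Fin (σ.ar R) → ℕ),
      -- the projection of `I` to each `↔_FUN`-class is contained in the tuples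
      (∀ (R : σ.Rel) (u : Fin (σ.ar R) → ℕ), (⟨R, u⟩ : Fact σ ℕ) ∈ I →
        ∀ i : Fin (σ.ar R), ∃ t ∈ PI R (fclass Sf R i), ∀ j ∈ fclass Sf R i, t j = u j) ∧
      -- the set of elements occurring in the piecewise instance is `dom(I) ⊔ H`
      ({a : ℕ | ∃ (R : σ.Rel) (i : Fin (σ.ar R)), ∃ t ∈ PI R (fclass Sf R i),
          ∃ j ∈ fclass Sf R i, t j = a} = activeDom I ∪ H) ∧
      -- every tuple not coming from `I` consists of elements that want their positions
      (∀ (R : σ.Rel) (i : Fin (σ.ar R)), ∀ t ∈ PI R (fclass Sf R i),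
        (¬ ∃ u : Fin (σ.ar R) → ℕ, (⟨R, u⟩ : Fact σ ℕ) ∈ I ∧
            ∀ j ∈ fclass Sf R i, t j = u j) →
        ∀ j ∈ fclass Sf R i, wantsP Su I H lam ⟨R, j⟩ (t j)) ∧
      -- `Sf`-compliance: no two distinct tuples of a class agree at any position
      (∀ (R : σ.Rel) (i : Fin (σ.ar R)), ∀ t ∈ PI R (fclass Sf R i),
        ∀ t' ∈ PI R (fclass Sf R i),
        (∃ j ∈ fclass Sf R i, t j = t' j) → ∀ j ∈ fclass Sf R i, t j = t' j) ∧
      -- `Su`-compliance: the projections satisfy all UIDs of `Su`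
      (∀ τ ∈ Su, projPI Sf PI τ.src ⊆ projPI Sf PI τ.dst) := by
  obtain ⟨PI, ⟨hext, helem, hnew⟩, hufd, huid⟩ :=
    realizations_general Su Sf hrev.1 I hfin hsat H lam hpss hbal
  exact ⟨PI, hext, helem, hnew, hufd, huid⟩

end FQA
end

section
/- (Weakly-universal models, arbitrary arity) Assume Σ_UID^rev and Σ_UFD are reversible. Then every finite instance I₀ satisfying Σ_UFD has a finite superinstance I that satisfies Σ_UID^rev ∪ Σ_UFD and is weakly-sound for Σ_UID^rev and I₀ (so reversible UIDs and UFDs have finite weakly-universal models for ACQs). -/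
namespace FQA

variable {σ : Sig} {α β : Type}

/-- Elements of the UID chase: base elements of the initial instance, and nulls.
The null `CEl.null x p r` is the fresh element placed at position `r` of the fact
created to satisfy the requirement that `x` appear at position `p`. -/
inductive CEl (σ : Sig) : Type
  | base : ℕ → CEl σ
  | null : CEl σ → σ.Pos → σ.Pos → CEl σ

/-- `Created I₀ Su x p` holds when the UID chase of `I₀` by the (transitively closed)
UIDs `Su` creates a new fact whose exported element is `x`, placed at position `p`.
The first round is performed as a core-chase round: for each element of `I₀` and each
position where it wants to appear, a single new fact is created; afterwards, each
null introduced at a position `r` spawns one new fact for each UID of `Su` with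
source `r`. -/
inductive Created (I₀ : Inst σ ℕ) (Su : Set (UID σ)) : CEl σ → σ.Pos → Prop
  | root (a : ℕ) (p : σ.Pos) :
      (∃ τ ∈ Su, τ.dst = p ∧ occursAt I₀ τ.src a) →
      ¬ occursAt I₀ p a →
      Created I₀ Su (CEl.base a) p
  | step (x : CEl σ) (p r q : σ.Pos) :
      Created I₀ Su x p → r.1 = p.1 → r ≠ p →
      (∃ τ ∈ Su, τ.src = r ∧ τ.dst = q) →
      Created I₀ Su (CEl.null x p r) q

/-- The UID chase of `I₀` by `Su`: the facts of `I₀` (over base elements) together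
with, for each requirement `(x, p)` that is created, the fact of relation `p.1` with
`x` at position `p` and fresh nulls at all other positions. -/
def chaseInst (I₀ : Inst σ ℕ) (Su : Set (UID σ)) : Inst σ (CEl σ) :=
  {F | (∃ F₀ : Fact σ ℕ, F₀ ∈ I₀ ∧ F = ⟨F₀.1, fun i => CEl.base (F₀.2 i)⟩) ∨
       (∃ (x : CEl σ) (p : σ.Pos), Created I₀ Su x p ∧
          F = ⟨p.1, fun i => if i = p.2 then x else CEl.null x p ⟨p.1, i⟩⟩)}

/-! Reversibility makes `Su` an equivalence relation on positions. Every class of positions gets a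
finite set of elements, all of these sets having the same size: it contains the elements of `I₀`
occurring in the class, and is filled up with fresh elements reserved for that class. We add facts
until each position occurring in a UID carries exactly the set of its class; then all UIDs hold,
and weak soundness is clear from the choice of the sets.

If a position `p` lacks an element, we add a fact which is new at the positions determining `p`
and agrees elsewhere with a fixed old fact of the same relation, if there is one, so that no UFD
is broken. A new element is available at each position `i` determining `p`: if `i` occurs in no
UID, any fresh element of its class will do; otherwise the UFD `i → p` has its reverse in `Sf`, so
`i` carries at most as many elements as `p` and its set is not used up either. -/

/-- The projection `π_p(I)`: the set of elements occurring at position `p` in `I`. -/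
def proj (I : Inst σ α) (p : σ.Pos) : Set α := {a | occursAt I p a}

theorem proj_subset_activeDom (I : Inst σ α) (p : σ.Pos) : proj I p ⊆ activeDom I := by
  rintro _ ⟨t, ht, rfl⟩
  exact ⟨_, ht, p.2, rfl⟩

theorem apply_mem_proj {I : Inst σ α} {R : σ.Rel} {t : Fin (σ.ar R) → α}
    (ht : (⟨R, t⟩ : Fact σ α) ∈ I) (i : Fin (σ.ar R)) : t i ∈ proj I ⟨R, i⟩ :=
  ⟨t, ht, rfl⟩

theorem proj_mono {I J : Inst σ α} (h : I ⊆ J) (p : σ.Pos) : proj I p ⊆ proj J p :=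
  fun _ ⟨t, ht, hta⟩ => ⟨t, h ht, hta⟩

theorem activeDom_finite {I : Inst σ α} (hI : I.Finite) : (activeDom I).Finite := by
  have h_eq : activeDom I = ⋃ F ∈ I, Set.range F.2 := by
    ext a
    simp [activeDom]
  exact h_eq ▸ hI.biUnion fun F _ => Set.finite_range F.2

theorem proj_finite {I : Inst σ α} (hI : I.Finite) (p : σ.Pos) : (proj I p).Finite :=
  (activeDom_finite hI).subset (proj_subset_activeDom I p)

theorem encard_proj_posDst_le {I : Inst σ α} {φ : UFD σ} (h : satUFD I φ) :
    (proj I φ.posDst).encard ≤ (proj I φ.posSrc).encard := by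
  have h_witness : ∀ a ∈ proj I φ.posDst, ∃ t : Fin (σ.ar φ.rel) → α,
      (⟨φ.rel, t⟩ : Fact σ α) ∈ I ∧ t φ.dst = a := fun _ ha => ha
  choose! t ht ht_dst using h_witness
  refine Set.encard_le_encard_of_injOn (f := fun a => t a φ.src)
    (fun a ha => apply_mem_proj (ht a ha) φ.src) fun a ha b hb hab => ?_
  rw [← ht_dst a ha, ← ht_dst b hb]
  exact h _ _ (ht a ha) (ht b hb) hab

/-! ### Adding a fact -/

theorem proj_insert_subset {I : Inst σ α} {A : σ.Pos → Set α} {R : σ.Rel}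
    {s : Fin (σ.ar R) → α} (hI : ∀ p, proj I p ⊆ A p) (hs : ∀ i, s i ∈ A ⟨R, i⟩) (p : σ.Pos) :
    proj (insert ⟨R, s⟩ I) p ⊆ A p := by
  obtain ⟨S, i⟩ := p
  rintro _ ⟨u, hu | hu, rfl⟩
  · cases hu
    exact hs i
  · exact hI _ (apply_mem_proj hu i)

theorem satUFD_insert {I : Inst σ α} {Sf : Set (UFD σ)} {R : σ.Rel} {s : Fin (σ.ar R) → α}
    (hI : ∀ φ ∈ Sf, satUFD I φ)
    (hs : ∀ i j (h : i ≠ j), (⟨R, i, j, h⟩ : UFD σ) ∈ Sf →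
      ∀ u, (⟨R, u⟩ : Fact σ α) ∈ I → s i = u i → s j = u j) :
    ∀ φ ∈ Sf, satUFD (insert ⟨R, s⟩ I) φ := by
  rintro ⟨S, i, j, hij⟩ hφ u v (hu | hu) (hv | hv) huv
  · cases hu
    cases hv
    rfl
  · cases hu
    exact hs i j hij hφ v hv huv
  · cases hv
    exact (hs i j hij hφ u hu huv.symm).symm
  · exact hI _ hφ u v hu hv huv

theorem satUFD_insert_piecewise {I : Inst σ α} {Sf : Set (UFD σ)} {R : σ.Rel}
    {Y : Set (Fin (σ.ar R))} [DecidablePred (· ∈ Y)] {d t : Fin (σ.ar R) → α}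
    (hI : ∀ φ ∈ Sf, satUFD I φ)
    (hY : ∀ i j (h : i ≠ j), (⟨R, i, j, h⟩ : UFD σ) ∈ Sf → j ∈ Y → i ∈ Y)
    (hd : ∀ i ∈ Y, d i ∉ proj I ⟨R, i⟩)
    (ht : ∀ u, (⟨R, u⟩ : Fact σ α) ∈ I → (⟨R, t⟩ : Fact σ α) ∈ I) :
    ∀ φ ∈ Sf, satUFD (insert ⟨R, Y.piecewise d t⟩ I) φ := by
  refine satUFD_insert hI fun i j hij hφ u hu hiu => ?_
  by_cases hi : i ∈ Y
  · rw [Y.piecewise_eq_of_mem _ _ hi] at hiu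
    exact absurd (hiu ▸ apply_mem_proj hu i) (hd i hi)
  · have hj : j ∉ Y := fun hj => hi (hY i j hij hφ hj)
    rw [Y.piecewise_eq_of_notMem _ _ hi] at hiu
    rw [Y.piecewise_eq_of_notMem _ _ hj]
    exact hI _ hφ t u (ht u hu) hu hiu

/-- The positions of the relation of `p` which determine `p` according to `Sf`, including `p`
itself. -/
def determiners (Sf : Set (UFD σ)) (p : σ.Pos) : Set (Fin (σ.ar p.1)) :=
  {i | i = p.2 ∨ ∃ h : i ≠ p.2, (⟨p.1, i, p.2, h⟩ : UFD σ) ∈ Sf}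

theorem mem_determiners_of_ufd {Sf : Set (UFD σ)} (hSf : TransClosedUFD Sf) {p : σ.Pos}
    {i j : Fin (σ.ar p.1)} (hij : i ≠ j) (hφ : (⟨p.1, i, j, hij⟩ : UFD σ) ∈ Sf)
    (hj : j ∈ determiners Sf p) : i ∈ determiners Sf p := by
  by_cases hip : i = p.2
  · exact Or.inl hip
  · rcases hj with rfl | ⟨hjp, hψ⟩
    · exact Or.inr ⟨hip, hφ⟩
    · exact Or.inr ⟨hip, hSf _ _ _ _ hij hjp hip hφ hψ⟩

/-! ### Saturating an instance -/

/-- `I` is a finite instance satisfying `Sf` in which only elements of `A p` occur at each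
position `p`. -/
structure Admissible (Sf : Set (UFD σ)) (A : σ.Pos → Set α) (I : Inst σ α) : Prop where
  finite : I.Finite
  satUFD : ∀ φ ∈ Sf, satUFD I φ
  proj_subset : ∀ p, proj I p ⊆ A p

/-- The condition on sets `A p` of allowed elements under which an admissible instance can be
extended until it uses up every finite `A p`: the positions with finite `A p` play the role of
those occurring in UIDs, the infinite `A p` provide an unlimited supply of new elements. -/
structure Balanced (Sf : Set (UFD σ)) (A : σ.Pos → Set α) : Prop where
  nonempty : ∀ p, (A p).Nonempty
  rev_mem : ∀ φ ∈ Sf, (A φ.posSrc).Finite → (A φ.posDst).Finite → φ.rev ∈ Sf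
  encard_eq : ∀ φ ∈ Sf, (A φ.posSrc).Finite → (A φ.posDst).Finite →
    (A φ.posSrc).encard = (A φ.posDst).encard

section Saturation

variable {Sf : Set (UFD σ)} {A : σ.Pos → Set α} {I : Inst σ α}

theorem Balanced.exists_fresh_posSrc (hA : Balanced Sf A) (hI : Admissible Sf A I) {φ : UFD σ}
    (hφ : φ ∈ Sf) (hfin : (A φ.posDst).Finite) (hdst : ¬ A φ.posDst ⊆ proj I φ.posDst) :
    ∃ b ∈ A φ.posSrc, b ∉ proj I φ.posSrc := by
  by_cases hsrc : (A φ.posSrc).Finite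
  · have h_lt : (proj I φ.posSrc).encard < (A φ.posSrc).encard := calc
      (proj I φ.posSrc).encard ≤ (proj I φ.posDst).encard :=
        encard_proj_posDst_le (hI.satUFD _ (hA.rev_mem φ hφ hsrc hfin))
      _ < (A φ.posDst).encard :=
        (proj_finite hI.finite _).encard_lt_encard ⟨hI.proj_subset _, hdst⟩
      _ = (A φ.posSrc).encard := (hA.encard_eq φ hφ hsrc hfin).symm
    exact Set.not_subset.1 fun h => h_lt.not_ge (Set.encard_le_encard h)
  · exact Set.Infinite.exists_notMem_finite hsrc (proj_finite hI.finite _)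

theorem Balanced.exists_fresh_determiner (hA : Balanced Sf A) (hI : Admissible Sf A I)
    {p : σ.Pos} (hfin : (A p).Finite) (hp : ¬ A p ⊆ proj I p) {i : Fin (σ.ar p.1)}
    (hi : i ∈ determiners Sf p) : ∃ b ∈ A ⟨p.1, i⟩, b ∉ proj I ⟨p.1, i⟩ := by
  rcases hi with rfl | ⟨_, hφ⟩
  · exact Set.not_subset.1 hp
  · exact hA.exists_fresh_posSrc hI hφ hfin hp

theorem Balanced.exists_template (hA : Balanced Sf A) (hI : Admissible Sf A I) (R : σ.Rel) :
    ∃ t : Fin (σ.ar R) → α, (∀ i, t i ∈ A ⟨R, i⟩) ∧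
      ∀ u, (⟨R, u⟩ : Fact σ α) ∈ I → (⟨R, t⟩ : Fact σ α) ∈ I := by
  by_cases h : ∃ t, (⟨R, t⟩ : Fact σ α) ∈ I
  · obtain ⟨t, ht⟩ := h
    exact ⟨t, fun i => hI.proj_subset _ (apply_mem_proj ht i), fun _ _ => ht⟩
  · choose t ht using fun i : Fin (σ.ar R) => hA.nonempty ⟨R, i⟩
    exact ⟨t, ht, fun u hu => absurd ⟨u, hu⟩ h⟩

theorem Balanced.exists_admissible_insert (hA : Balanced Sf A) (hSf : TransClosedUFD Sf)
    (hI : Admissible Sf A I) {p : σ.Pos} (hfin : (A p).Finite) (hp : ¬ A p ⊆ proj I p) :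
    ∃ F : Fact σ α, Admissible Sf A (insert F I) ∧ ¬ proj (insert F I) p ⊆ proj I p := by
  classical
  obtain ⟨t, htA, htI⟩ := hA.exists_template hI p.1
  have : Nonempty α := ⟨t p.2⟩
  choose! d hdA hdI using fun i => hA.exists_fresh_determiner hI hfin hp (i := i)
  let s := (determiners Sf p).piecewise d t
  have hsA (i) : s i ∈ A ⟨p.1, i⟩ := by
    by_cases hi : i ∈ determiners Sf p
    · simpa only [s, Set.piecewise_eq_of_mem _ _ _ hi] using hdA i hi
    · simpa only [s, Set.piecewise_eq_of_notMem _ _ _ hi] using htA i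
  have hp_mem : p.2 ∈ determiners Sf p := Or.inl rfl
  refine ⟨⟨p.1, s⟩, ⟨hI.finite.insert _, ?_, proj_insert_subset hI.proj_subset hsA⟩, fun h => ?_⟩
  · exact satUFD_insert_piecewise hI.satUFD
      (fun _ _ hij hφ hj => mem_determiners_of_ufd hSf hij hφ hj) hdI htI
  · refine hdI p.2 hp_mem (h ⟨s, Set.mem_insert _ _, ?_⟩)
    exact Set.piecewise_eq_of_mem _ _ _ hp_mem

theorem Balanced.exists_saturated (hA : Balanced Sf A) (hSf : TransClosedUFD Sf)
    (hI : Admissible Sf A I) :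
    ∃ J, I ⊆ J ∧ Admissible Sf A J ∧ ∀ p, (A p).Finite → proj J p = A p := by
  have := σ.rel_fin
  let finiteProj (J : Inst σ α) (p : {p // (A p).Finite}) : Set α := proj J p
  have h_bounded : (finiteProj '' {J | I ⊆ J ∧ Admissible Sf A J}).Finite := by
    refine (Set.Finite.pi' fun p : {p // (A p).Finite} => p.2.finite_subsets).subset ?_
    rintro _ ⟨J, ⟨-, hJ⟩, rfl⟩ p
    exact hJ.proj_subset p
  obtain ⟨J, ⟨hIJ, hJ⟩, hmax⟩ := h_bounded.exists_maximalFor' finiteProj _ ⟨I, subset_rfl, hI⟩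
  refine ⟨J, hIJ, hJ, fun p hfin => (hJ.proj_subset p).antisymm ?_⟩
  by_contra hp
  obtain ⟨F, hF, hnew⟩ := hA.exists_admissible_insert hSf hJ hfin hp
  have hJF : J ⊆ insert F J := Set.subset_insert F J
  exact hnew (hmax ⟨hIJ.trans hJF, hF⟩ (fun q => proj_mono hJF q) ⟨p, hfin⟩)

end Saturation

/-! ### Classes of positions -/

section PositionClasses

variable {Su : Set (UID σ)}

/-- The positions `q` such that `q = p` or `q ⊆ p` is in `Su`. If `Su` is transitively closed
and closed under reversal, this is the equivalence class of `p`. -/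
def uidClass (Su : Set (UID σ)) (p : σ.Pos) : Set σ.Pos :=
  {q | q = p ∨ ∃ h : q ≠ p, (⟨q, p, h⟩ : UID σ) ∈ Su}

theorem mem_uidClass_self (Su : Set (UID σ)) (p : σ.Pos) : p ∈ uidClass Su p := Or.inl rfl

theorem uidClass_src_subset (htrans : TransClosedUID Su) {τ : UID σ} (hτ : τ ∈ Su) :
    uidClass Su τ.src ⊆ uidClass Su τ.dst := by
  intro q hq
  by_cases hne : q = τ.dst
  · exact Or.inl hne
  · rcases hq with rfl | ⟨_, hτ'⟩
    · exact Or.inr ⟨hne, hτ⟩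
    · exact Or.inr ⟨hne, htrans _ hτ' _ hτ rfl hne⟩

theorem uidClass_src_eq (htrans : TransClosedUID Su) (hrev : ∀ τ ∈ Su, τ.rev ∈ Su) {τ : UID σ}
    (hτ : τ ∈ Su) : uidClass Su τ.src = uidClass Su τ.dst :=
  (uidClass_src_subset htrans hτ).antisymm (uidClass_src_subset htrans (hrev τ hτ))

theorem eq_or_mutual_uid_of_uidClass_eq {p q : σ.Pos} (h : uidClass Su p = uidClass Su q) :
    p = q ∨ ∃ h : p ≠ q, (⟨p, q, h⟩ : UID σ) ∈ Su ∧ (⟨q, p, h.symm⟩ : UID σ) ∈ Su := by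
  have hp : p ∈ uidClass Su q := h ▸ mem_uidClass_self Su p
  have hq : q ∈ uidClass Su p := h ▸ mem_uidClass_self Su q
  rcases hp with hpq | ⟨hpq, hp⟩
  · exact Or.inl hpq
  · rcases hq with hqp | ⟨_, hq⟩
    · exact Or.inl hqp.symm
    · exact Or.inr ⟨hpq, hp, hq⟩

/-- The elements occurring in `I` at some position of `C`. -/
def classProj (I : Inst σ α) (C : Set σ.Pos) : Set α := ⋃ q ∈ C, proj I q

theorem proj_subset_classProj_uidClass (Su : Set (UID σ)) (I : Inst σ α) (p : σ.Pos) :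
    proj I p ⊆ classProj I (uidClass Su p) :=
  Set.subset_biUnion_of_mem (mem_uidClass_self Su p)

theorem classProj_subset_activeDom (I : Inst σ α) (C : Set σ.Pos) :
    classProj I C ⊆ activeDom I :=
  Set.iUnion₂_subset fun q _ => proj_subset_activeDom I q

theorem occursAt_or_wants_of_mem_classProj {I : Inst σ α} {p : σ.Pos} {a : α}
    (ha : a ∈ classProj I (uidClass Su p)) : occursAt I p a ∨ wants Su I p a := by
  obtain ⟨q, rfl | ⟨_, hτ⟩, haq⟩ := Set.mem_iUnion₂.1 ha
  · exact Or.inl haq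
  · exact or_iff_not_imp_left.2 fun hap => ⟨⟨_, hτ, rfl, haq⟩, hap⟩

theorem weaklySound_of_proj_subset {I₀ I : Inst σ ℕ} {fresh : Set σ.Pos → Set ℕ}
    (hdisj : Pairwise (Function.onFun Disjoint fresh))
    (hnew : ∀ C, Disjoint (fresh C) (activeDom I₀))
    (hI : ∀ p, proj I p ⊆ classProj I₀ (uidClass Su p) ∪ fresh (uidClass Su p)) :
    WeaklySound Su I₀ I := by
  refine ⟨fun a ha p hp => ?_, fun a _ ha p q hp hq => ?_⟩
  · rcases hI p hp with h | h
    · exact occursAt_or_wants_of_mem_classProj h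
    · exact absurd ha ((hnew _).notMem_of_mem_left h)
  · have mem_fresh {r : σ.Pos} (hr : occursAt I r a) : a ∈ fresh (uidClass Su r) :=
      (hI r hr).resolve_left fun h => ha (classProj_subset_activeDom _ _ h)
    exact eq_or_mutual_uid_of_uidClass_eq <| hdisj.eq <|
      Set.not_disjoint_iff.2 ⟨a, mem_fresh hp, mem_fresh hq⟩

end PositionClasses

/-! ### Allotting elements to positions -/

theorem exists_pairwise_disjoint_infinite_avoiding {α : Type*} {ι : Type*} [Infinite α]
    [Countable ι] {D : Set α} (hD : D.Finite) :
    ∃ S : ι → Set α, (∀ i, (S i).Infinite) ∧ Pairwise (Function.onFun Disjoint S) ∧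
      ∀ i, Disjoint (S i) D := by
  obtain ⟨code, hcode⟩ := Countable.exists_injective_nat ι
  have := hD.infinite_compl.to_subtype
  let f := Infinite.natEmbedding ↥Dᶜ
  refine ⟨fun i => Set.range fun n => (f (Nat.pair (code i) n) : α), fun i => ?_,
    fun i j hij => ?_, fun i => ?_⟩
  · refine Set.infinite_range_of_injective fun m n hmn => ?_
    exact (Nat.pair_eq_pair.1 (f.injective (Subtype.ext hmn))).2
  · rw [Function.onFun, Set.disjoint_left]
    rintro _ ⟨m, rfl⟩ ⟨n, hmn⟩
    exact hij (hcode (Nat.pair_eq_pair.1 (f.injective (Subtype.ext hmn))).1.symm)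
  · rw [Set.disjoint_left]
    rintro _ ⟨n, rfl⟩
    exact (f _).2

theorem exists_superset_classProj_encard_eq (I : Inst σ α) {fresh : Set σ.Pos → Set α}
    (hinf : ∀ C, (fresh C).Infinite) :
    ∃ E : Set σ.Pos → Set α, ∀ C, classProj I C ⊆ E C ∧ E C ⊆ classProj I C ∪ fresh C ∧
      (E C).encard = (activeDom I).encard + 1 := by
  have h_superset (C) : ∃ E, classProj I C ⊆ E ∧ E ⊆ classProj I C ∪ fresh C ∧
      E.encard = (activeDom I).encard + 1 :=
    Set.exists_superset_subset_encard_eq Set.subset_union_left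
      ((Set.encard_le_encard (classProj_subset_activeDom I C)).trans le_self_add)
      (((hinf C).mono Set.subset_union_right).encard_eq ▸ le_top)
  choose E hE using h_superset
  exact ⟨E, hE⟩

open scoped Classical in
/-- The elements allowed at position `p`: those of the set `E` of its class if `p` occurs in a
UID of `Su`, and those of the set `W` of its class otherwise. -/
def allowed (Su : Set (UID σ)) (E W : Set σ.Pos → Set α) (p : σ.Pos) : Set α :=
  if occursInUIDs Su p then E (uidClass Su p) else W (uidClass Su p)

section Allowed

variable {Su : Set (UID σ)} {Sf : Set (UFD σ)} {E W : Set σ.Pos → Set α} {p : σ.Pos}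

theorem allowed_of_occursInUIDs (hp : occursInUIDs Su p) :
    allowed Su E W p = E (uidClass Su p) :=
  if_pos hp

theorem allowed_of_not_occursInUIDs (hp : ¬ occursInUIDs Su p) :
    allowed Su E W p = W (uidClass Su p) :=
  if_neg hp

theorem allowed_subset (hEW : ∀ C, E C ⊆ W C) (p : σ.Pos) :
    allowed Su E W p ⊆ W (uidClass Su p) := by
  by_cases hp : occursInUIDs Su p
  · exact (allowed_of_occursInUIDs hp).trans_subset (hEW _)
  · exact (allowed_of_not_occursInUIDs hp).subset

theorem subset_allowed (hEW : ∀ C, E C ⊆ W C) (p : σ.Pos) :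
    E (uidClass Su p) ⊆ allowed Su E W p := by
  by_cases hp : occursInUIDs Su p
  · exact (allowed_of_occursInUIDs hp).superset
  · exact (hEW _).trans (allowed_of_not_occursInUIDs hp).superset

theorem occursInUIDs_of_allowed_finite (hW : ∀ C, (W C).Infinite)
    (hp : (allowed Su E W p).Finite) : occursInUIDs Su p := by
  by_contra hU
  exact hW _ (allowed_of_not_occursInUIDs hU ▸ hp)

theorem balanced_allowed
    (hrev : ∀ φ ∈ Sf, occursInUIDs Su φ.posSrc → occursInUIDs Su φ.posDst → φ.rev ∈ Sf)
    (hEW : ∀ C, E C ⊆ W C) (hW : ∀ C, (W C).Infinite) {N : ℕ∞} (hN : N ≠ 0)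
    (hE : ∀ C, (E C).encard = N) :
    Balanced Sf (allowed Su E W) where
  nonempty p :=
    (Set.encard_ne_zero.1 (hE (uidClass Su p) ▸ hN)).mono (subset_allowed hEW p)
  rev_mem φ hφ hsrc hdst :=
    hrev φ hφ (occursInUIDs_of_allowed_finite hW hsrc)
      (occursInUIDs_of_allowed_finite hW hdst)
  encard_eq φ _ hsrc hdst := by
    rw [allowed_of_occursInUIDs (occursInUIDs_of_allowed_finite hW hsrc),
      allowed_of_occursInUIDs (occursInUIDs_of_allowed_finite hW hdst), hE, hE]

theorem satUID_of_proj_eq_allowed (htrans : TransClosedUID Su)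
    (hrev : ∀ τ ∈ Su, τ.rev ∈ Su) (hE : ∀ C, (E C).Finite) {J : Inst σ α}
    (hJ : ∀ p, (allowed Su E W p).Finite → proj J p = allowed Su E W p) {τ : UID σ}
    (hτ : τ ∈ Su) : satUID J τ := by
  have proj_eq {p : σ.Pos} (hp : occursInUIDs Su p) : proj J p = E (uidClass Su p) :=
    (hJ p (allowed_of_occursInUIDs hp ▸ hE _)).trans (allowed_of_occursInUIDs hp)
  have h_eq : proj J τ.src = proj J τ.dst := by
    rw [proj_eq ⟨τ, hτ, Or.inl rfl⟩, proj_eq ⟨τ, hτ, Or.inr rfl⟩,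
      uidClass_src_eq htrans hrev hτ]
  exact h_eq.subset

end Allowed

theorem weakly_universal_models_general {Su : Set (UID σ)} {Sf : Set (UFD σ)}
    (hrev : Reversible Su Sf) {I₀ : Inst σ ℕ} (hfin : I₀.Finite)
    (hsat : ∀ φ ∈ Sf, satUFD I₀ φ) :
    ∃ I : Inst σ ℕ, I₀ ⊆ I ∧ I.Finite ∧
      (∀ τ ∈ Su, satUID I τ) ∧ (∀ φ ∈ Sf, satUFD I φ) ∧
      WeaklySound Su I₀ I := by
  have := σ.rel_fin
  obtain ⟨htransUID, htransUFD, hrevUID, hrevUFD⟩ := hrev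
  have hdom := activeDom_finite hfin
  obtain ⟨fresh, hinf, hdisj, hnew⟩ :=
    exists_pairwise_disjoint_infinite_avoiding (ι := Set σ.Pos) hdom
  obtain ⟨E, hE⟩ := exists_superset_classProj_encard_eq I₀ hinf
  let W (C : Set σ.Pos) : Set ℕ := classProj I₀ C ∪ fresh C
  have hEW (C) : E C ⊆ W C := (hE C).2.1
  have hW (C) : (W C).Infinite := (hinf C).mono Set.subset_union_right
  have hEfin (C) : (E C).Finite := Set.encard_lt_top_iff.1 <| by
    rw [(hE C).2.2]
    exact ENat.add_lt_top.2 ⟨hdom.encard_lt_top, ENat.one_lt_top⟩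
  have hbal : Balanced Sf (allowed Su E W) :=
    balanced_allowed hrevUFD hEW hW (by simp) fun C => (hE C).2.2
  have hadm : Admissible Sf (allowed Su E W) I₀ := ⟨hfin, hsat, fun p =>
    ((proj_subset_classProj_uidClass Su I₀ p).trans (hE _).1).trans (subset_allowed hEW p)⟩
  obtain ⟨J, hIJ, hJ, hfull⟩ := hbal.exists_saturated htransUFD hadm
  exact ⟨J, hIJ, hJ.finite,
    fun _ => satUID_of_proj_eq_allowed htransUID hrevUID hEfin hfull, hJ.satUFD,
    weaklySound_of_proj_subset hdisj hnew fun p => (hJ.proj_subset p).trans (allowed_subset hEW p)⟩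

/-- **Weakly-universal models, arbitrary arity.** For reversible UIDs `Su` and UFDs
`Sf`, assuming no useless relations (every relation occurs in some fact of the UID
chase of `I₀` by `Su`), every finite instance `I₀` satisfying `Sf` has a finite
superinstance satisfying `Su ∪ Sf` which is weakly-sound for `Su` and `I₀`. -/
theorem weakly_universal_models
    {σ : Sig} (Su : Set (UID σ)) (Sf : Set (UFD σ))
    (hrev : Reversible Su Sf)
    (I₀ : Inst σ ℕ) (hfin : I₀.Finite)
    (hsat : ∀ φ ∈ Sf, satUFD I₀ φ)
    (huseful : ∀ R : σ.Rel, ∃ t : Fin (σ.ar R) → CEl σ,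
        (⟨R, t⟩ : Fact σ (CEl σ)) ∈ chaseInst I₀ Su) :
    ∃ I : Inst σ ℕ, I₀ ⊆ I ∧ I.Finite ∧
      (∀ τ ∈ Su, satUID I τ) ∧ (∀ φ ∈ Sf, satUFD I φ) ∧
      WeaklySound Su I₀ I :=
  weakly_universal_models_general hrev hfin hsat

end FQA
end

section
/- (ACQ Preservation) Let I and I' be instances, n ∈ ℕ, and q a Boolean acyclic conjunctive query (ACQ) with |q| ≤ n. If I ⊨ q and there exists an n-bounded simulation from I to I', then I' ⊨ q. -/
namespace FQA

variable {σ : Sig} {α β : Type}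

/-- A Boolean conjunctive query: existentially quantified variables `Fin nv` and a
conjunction (list) of constant-free atoms, in which every variable occurs. -/
structure CQ (σ : Sig) where
  nv : ℕ
  atoms : List (Fact σ (Fin nv))
  vars_occur : ∀ x : Fin nv, ∃ A ∈ atoms, ∃ i, A.2 i = x

/-- The size of a CQ: its number of atoms. -/
def CQ.size (q : CQ σ) : ℕ := q.atoms.length

/-- A Boolean CQ holds in an instance iff there is a homomorphism (a match) from its
atoms to facts of the instance. -/
def satCQ (I : Inst σ α) (q : CQ σ) : Prop :=
  ∃ h : Fin q.nv → α, ∀ A ∈ q.atoms, (⟨A.1, fun i => h (A.2 i)⟩ : Fact σ α) ∈ I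

/-- A Berge cycle of a CQ: `m + 2 ≥ 2` pairwise distinct atom occurrences and pairwise
distinct variables, cyclically incident. -/
def HasBergeCycle (q : CQ σ) : Prop :=
  ∃ m : ℕ, ∃ A : Fin (m + 2) → Fin q.atoms.length, Function.Injective A ∧
    ∃ x : Fin (m + 2) → Fin q.nv, Function.Injective x ∧
      ∀ i : Fin (m + 2),
        (∃ a, (q.atoms.get (A i)).2 a = x i) ∧
        (∃ a, (q.atoms.get (A (i + 1))).2 a = x i)

/-- An acyclic CQ (ACQ): no Berge cycle and no variable occurring twice in one atom. -/
def IsACQ (q : CQ σ) : Prop :=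
  ¬ HasBergeCycle q ∧ ∀ A ∈ q.atoms, Function.Injective A.2

/-- The bounded simulation relation `(I, a) ≤_n (J, b)`: it always holds for `n = 0`,
and for `n + 1` it holds iff every fact of `I` containing `a` at some position has a
witnessing fact of `J` containing `b` at that position whose elements are pairwise
`≤_n`-related to those of the original fact. -/
def bsim (I : Inst σ α) (J : Inst σ β) : ℕ → α → β → Prop
  | 0, _, _ => True
  | n + 1, a, b =>
      ∀ (R : σ.Rel) (t : Fin (σ.ar R) → α) (p : Fin (σ.ar R)),
        (⟨R, t⟩ : Fact σ α) ∈ I → t p = a →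
        ∃ u : Fin (σ.ar R) → β, (⟨R, u⟩ : Fact σ β) ∈ J ∧ u p = b ∧
          ∀ q : Fin (σ.ar R), bsim I J n (t q) (u q)

/-!
View the atoms of a query as hyperedges on its variables. If every atom shared two or more variables
with the others, one could walk forever from atom to atom without backtracking, and a shortest
chord of that walk would close a Berge cycle. Hence every set of atoms of an acyclic query contains
a leaf, an atom attached to the rest through at most one variable. Match the other atoms first; a
single step of the simulation, taken at the attaching variable, then extends the match to the leaf.
Each atom uses up one level of the bounded simulation, so `|q|` levels suffice.
-/

section Hypergraph

variable {ι V : Type*} {E : ι → Set V}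

/-- A family of hyperedges `E` is Berge-cyclic if it has a Berge cycle of length `m + 2`; indices
are added modulo `m + 2`. -/
def BergeCyclic (E : ι → Set V) : Prop :=
  ∃ m : ℕ, ∃ e : Fin (m + 2) → ι, Function.Injective e ∧
    ∃ v : Fin (m + 2) → V, Function.Injective v ∧ ∀ i, v i ∈ E (e i) ∧ v i ∈ E (e (i + 1))

/-- An infinite walk `e 0, v 0, e 1, v 1, …` alternating between hyperedges and vertices, in which
neither two consecutive hyperedges nor two consecutive vertices coincide. -/
structure IsNonbacktracking (E : ι → Set V) (e : ℕ → ι) (v : ℕ → V) : Prop where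
  mem : ∀ i, v i ∈ E (e i)
  mem_succ : ∀ i, v i ∈ E (e (i + 1))
  edge_ne : ∀ i, e i ≠ e (i + 1)
  vertex_ne : ∀ i, v i ≠ v (i + 1)

/-- Some hyperedge of the walk contains the vertex visited `m + 1` places after it. The shift makes
the part of the walk cut off by the chord consist of `m + 2` hyperedges, as in `BergeCyclic`. -/
def HasChord (E : ι → Set V) (e : ℕ → ι) (v : ℕ → V) (m : ℕ) : Prop :=
  ∃ s, v (s + m + 1) ∈ E (e s)

/-- The vertices of the hyperedge `E A` lying on another hyperedge indexed by `T`. -/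
def sharedVertices (E : ι → Set V) (T : Set ι) (A : ι) : Set V :=
  {x ∈ E A | ∃ B ∈ T, B ≠ A ∧ x ∈ E B}

lemma exists_eq_add_two_of_apply_eq {γ : Type*} {f : ℕ → γ} (hne : ∀ i, f i ≠ f (i + 1)) {i j : ℕ}
    (hij : i < j) (hf : f i = f j) : ∃ k, j = i + k + 2 := by
  have hj : j ≠ i + 1 := fun h => hne i (h ▸ hf)
  exact ⟨j - i - 2, by omega⟩

lemma injective_window {γ : Type*} {f : ℕ → γ} {m : ℕ} (hne : ∀ i, f i ≠ f (i + 1))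
    (hfar : ∀ k < m, ∀ i, f i ≠ f (i + k + 2)) (s : ℕ) :
    Function.Injective fun i : Fin (m + 2) => f (s + i) := by
  refine .of_lt_imp_ne fun i j hij hf => ?_
  obtain ⟨k, hk⟩ := exists_eq_add_two_of_apply_eq hne (Nat.add_lt_add_left hij s) hf
  exact hfar k (by omega) (s + i) (hk ▸ hf)

namespace IsNonbacktracking

variable {e : ℕ → ι} {v : ℕ → V}

lemma hasChord_of_edge_eq (hw : IsNonbacktracking E e v) {i m : ℕ} (h : e i = e (i + m + 2)) :
    HasChord E e v m :=
  ⟨i, h ▸ hw.mem_succ (i + m + 1)⟩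

lemma hasChord_of_vertex_eq (hw : IsNonbacktracking E e v) {i m : ℕ} (h : v i = v (i + m + 2)) :
    HasChord E e v m := by
  refine ⟨i + 1, ?_⟩
  rw [show i + 1 + m + 1 = i + m + 2 by omega, ← h]
  exact hw.mem_succ i

lemma exists_hasChord (hw : IsNonbacktracking E e v) {T : Set ι} (hT : T.Finite)
    (heT : ∀ i, e i ∈ T) : ∃ m, HasChord E e v m := by
  obtain ⟨i, j, hij, he⟩ := hT.exists_lt_map_eq_of_forall_mem heT
  obtain ⟨m, rfl⟩ := exists_eq_add_two_of_apply_eq hw.edge_ne hij he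
  exact ⟨m, hw.hasChord_of_edge_eq he⟩

lemma bergeCyclic_of_minimal_chord (hw : IsNonbacktracking E e v) {m : ℕ}
    (hchord : HasChord E e v m) (hmin : ∀ k < m, ¬ HasChord E e v k) : BergeCyclic E := by
  obtain ⟨s, hs⟩ := hchord
  refine ⟨m, fun i => e (s + i),
    injective_window hw.edge_ne (fun k hk i h => hmin k hk (hw.hasChord_of_edge_eq h)) s,
    fun i => v (s + i),
    injective_window hw.vertex_ne (fun k hk i h => hmin k hk (hw.hasChord_of_vertex_eq h)) s,
    fun i => ⟨hw.mem _, ?_⟩⟩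
  simp only [Fin.val_add_one]
  split_ifs with hi
  · subst hi
    exact hs
  · exact hw.mem_succ (s + i)

lemma bergeCyclic (hw : IsNonbacktracking E e v) {T : Set ι} (hT : T.Finite)
    (heT : ∀ i, e i ∈ T) : BergeCyclic E := by
  classical
  have hex := hw.exists_hasChord hT heT
  exact hw.bergeCyclic_of_minimal_chord (Nat.find_spec hex) fun _ => Nat.find_min hex

end IsNonbacktracking

lemma exists_isNonbacktracking {T : Set ι} (hT : T.Nonempty)
    (hnt : ∀ A ∈ T, (sharedVertices E T A).Nontrivial) :
    ∃ (e : ℕ → ι) (v : ℕ → V), IsNonbacktracking E e v ∧ ∀ i, e i ∈ T := by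
  have step : ∀ w : (A : T) × sharedVertices E T A, ∃ w' : (A : T) × sharedVertices E T A,
      w.1.1 ≠ w'.1.1 ∧ w.2.1 ≠ w'.2.1 ∧ w.2.1 ∈ E w'.1 := by
    rintro ⟨⟨A, hA⟩, x, hxA, B, hB, hBA, hxB⟩
    obtain ⟨y, hy, hyx⟩ := (hnt B hB).exists_ne x
    exact ⟨⟨⟨B, hB⟩, y, hy⟩, hBA.symm, hyx.symm, hxB⟩
  choose advance hedge hvertex hmem using step
  obtain ⟨A, hA⟩ := hT
  obtain ⟨x, hx⟩ := (hnt A hA).nonempty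
  let w : ℕ → (A : T) × sharedVertices E T A := fun i => advance^[i] ⟨⟨A, hA⟩, x, hx⟩
  have hw : ∀ i, w (i + 1) = advance (w i) := fun i => Function.iterate_succ_apply' advance i _
  refine ⟨fun i => (w i).1, fun i => (w i).2, ⟨fun i => (w i).2.2.1, fun i => ?_, fun i => ?_,
    fun i => ?_⟩, fun i => (w i).1.2⟩
  · exact hw i ▸ hmem (w i)
  · exact hw i ▸ hedge (w i)
  · exact hw i ▸ hvertex (w i)

lemma exists_sharedVertices_subsingleton (hE : ¬ BergeCyclic E) {T : Set ι} (hfin : T.Finite)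
    (hT : T.Nonempty) : ∃ A ∈ T, (sharedVertices E T A).Subsingleton := by
  by_contra! hnt
  obtain ⟨e, v, hw, heT⟩ := exists_isNonbacktracking hT hnt
  exact hE (hw.bergeCyclic hfin heT)

end Hypergraph

/-- The image `R(h(a₁), …, h(aₖ))` of the fact, or atom, `R(a₁, …, aₖ)` under `h`. -/
def Fact.map {γ δ : Type} (h : γ → δ) (F : Fact σ γ) : Fact σ δ :=
  ⟨F.1, h ∘ F.2⟩

/-- The elements of a fact, or variables of an atom: the hyperedge it spans. -/
def Fact.vars {γ : Type} (F : Fact σ γ) : Set γ :=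
  Set.range F.2

lemma Fact.map_congr {γ δ : Type} {g h : γ → δ} {F : Fact σ γ} (hgh : Set.EqOn g h F.vars) :
    F.map g = F.map h :=
  Sigma.ext rfl (heq_of_eq (funext fun i => hgh ⟨i, rfl⟩))

variable {I : Inst σ α} {J : Inst σ β}

lemma bsim_of_succ {n : ℕ} {a : α} {b : β} (h : bsim I J (n + 1) a b) : bsim I J n a b := by
  induction n generalizing a b with
  | zero => trivial
  | succ n ih =>
    intro R t p ht hp
    obtain ⟨u, hu, hup, hsim⟩ := h R t p ht hp
    exact ⟨u, hu, hup, fun i => ih (hsim i)⟩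

section AtomFamily

variable {ι V : Type} {h : V → α}

lemma exists_bsim_map_mem {F : Fact σ V} (hF : Function.Injective F.2) (hI : F.map h ∈ I)
    {n : ℕ} {g : V → β} (hg : ∀ x, bsim I J (n + 1) (h x) (g x)) (p : Fin (σ.ar F.1)) :
    ∃ g' : V → β, (∀ x, bsim I J n (h x) (g' x)) ∧ F.map g' ∈ J ∧
      ∀ x, (x ∈ F.vars → x = F.2 p) → g' x = g x := by
  obtain ⟨u, hu, hup, hsim⟩ := hg (F.2 p) F.1 (h ∘ F.2) p hI rfl
  refine ⟨Function.extend F.2 u g, fun x => ?_, ?_, fun x hx => ?_⟩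
  · by_cases hxF : x ∈ F.vars
    · obtain ⟨i, rfl⟩ := hxF
      rw [hF.extend_apply]
      exact hsim i
    · rw [Function.extend_apply' _ _ _ hxF]
      exact bsim_of_succ (hg x)
  · rwa [Fact.map, Function.extend_comp hF]
  · by_cases hxF : x ∈ F.vars
    · rw [hx hxF, hF.extend_apply, hup]
    · exact Function.extend_apply' _ _ _ hxF

lemma exists_forall_eq_of_sharedVertices_subsingleton {F : ι → Fact σ V} {T : Set ι} {A : ι}
    (hA : (sharedVertices (fun B => (F B).vars) T A).Subsingleton) :
    ∃ p, ∀ x ∈ sharedVertices (fun B => (F B).vars) T A, x = (F A).2 p := by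
  rcases hA.eq_empty_or_singleton with hempty | ⟨y, hy⟩
  · exact ⟨⟨0, σ.ar_pos _⟩, by simp [hempty]⟩
  · obtain ⟨p, rfl⟩ : y ∈ (F A).vars := (hy.ge rfl).1
    exact ⟨p, fun x hx => hy.le hx⟩

lemma exists_bsim_map_mem_of_leaf {F : ι → Fact σ V} {T : Set ι} {A : ι}
    (hleaf : (sharedVertices (fun B => (F B).vars) T A).Subsingleton)
    (hinj : Function.Injective (F A).2) (hI : (F A).map h ∈ I) {n : ℕ} {g : V → β}
    (hg : ∀ x, bsim I J (n + 1) (h x) (g x)) (hgT : ∀ B ∈ T, B ≠ A → (F B).map g ∈ J) :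
    ∃ g' : V → β, (∀ x, bsim I J n (h x) (g' x)) ∧ ∀ B ∈ T, (F B).map g' ∈ J := by
  obtain ⟨p, hp⟩ := exists_forall_eq_of_sharedVertices_subsingleton hleaf
  obtain ⟨g', hsim, hA, hagree⟩ := exists_bsim_map_mem hinj hI hg p
  refine ⟨g', hsim, fun B hB => ?_⟩
  obtain rfl | hBA := eq_or_ne B A
  · exact hA
  · have heq : Set.EqOn g' g (F B).vars :=
      fun x hxB => hagree x fun hxA => hp x ⟨hxA, B, hB, hBA, hxB⟩
    rw [Fact.map_congr heq]
    exact hgT B hB hBA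

theorem exists_bsim_map_mem_of_not_bergeCyclic {F : ι → Fact σ V}
    (hE : ¬ BergeCyclic fun A => (F A).vars) (hinj : ∀ A, Function.Injective (F A).2)
    (hI : ∀ A, (F A).map h ∈ I) {g : V → β} (T : Finset ι) {n : ℕ}
    (hg : ∀ x, bsim I J (n + T.card) (h x) (g x)) :
    ∃ g' : V → β, (∀ x, bsim I J n (h x) (g' x)) ∧ ∀ A ∈ T, (F A).map g' ∈ J := by
  classical
  induction hc : T.card generalizing T n with
  | zero => exact ⟨g, by simpa [hc] using hg, by simp [Finset.card_eq_zero.1 hc]⟩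
  | succ c ih =>
    have hT : T.Nonempty := Finset.card_pos.1 (by omega)
    obtain ⟨A, hA, hleaf⟩ := exists_sharedVertices_subsingleton hE T.finite_toSet hT
    have hcard : (T.erase A).card = c := by rw [Finset.card_erase_of_mem hA, hc, Nat.add_sub_cancel]
    obtain ⟨g', hsim, hmem⟩ := ih (T.erase A) (n := n + 1)
      (by rwa [hcard, Nat.add_assoc, Nat.add_comm 1, ← hc]) hcard
    exact exists_bsim_map_mem_of_leaf hleaf (hinj A) (hI A) hsim
      fun B hB hBA => hmem B (Finset.mem_erase.2 ⟨hBA, hB⟩)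

end AtomFamily

theorem acq_preservation_general {n : ℕ} {q : CQ σ} (hacq : IsACQ q) (hsz : q.size ≤ n)
    (hq : satCQ I q) {f : α → β} (hf : ∀ a ∈ activeDom I, bsim I J n a (f a)) : satCQ J q := by
  obtain ⟨h, hh⟩ := hq
  obtain ⟨k, rfl⟩ := Nat.exists_eq_add_of_le' hsz
  have hsim : ∀ x, bsim I J (k + q.size) (h x) (f (h x)) := fun x => by
    obtain ⟨A, hA, i, rfl⟩ := q.vars_occur x
    exact hf _ ⟨_, hh A hA, i, rfl⟩
  obtain ⟨g, -, hg⟩ := exists_bsim_map_mem_of_not_bergeCyclic (F := q.atoms.get) hacq.1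
    (fun A => hacq.2 _ (q.atoms.get_mem A)) (fun A => hh _ (q.atoms.get_mem A)) Finset.univ
    (by rwa [Finset.card_fin])
  refine ⟨g, fun A hA => ?_⟩
  obtain ⟨i, rfl⟩ := List.get_of_mem hA
  exact hg i (Finset.mem_univ i)

/-- **ACQ Preservation.** If a Boolean acyclic CQ `q` of size at most `n` holds in
`I`, and there is an `n`-bounded simulation from `I` to `I'`, then `q` holds in `I'`. -/
theorem acq_preservation
    {σ : Sig} (I I' : Inst σ ℕ) (n : ℕ)
    (q : CQ σ) (hacq : IsACQ q) (hsz : q.size ≤ n)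
    (hq : satCQ I q)
    (f : ℕ → ℕ) (hf : ∀ a ∈ activeDom I, bsim I I' n a (f a)) :
    satCQ I' q :=
  acq_preservation_general hacq hsz hq hf

end FQA
end
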